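/- Let k be a field, X a k-vector space, and L a set of linear subspaces of X that is closed under sum and intersection (a lattice of subspaces). Suppose X = ⊕_{i∈I} X_i is an internal direct sum decomposition of X into subspaces such that every u ∈ L satisfies u = ⊕_{i∈I} (u ∩ X_i). Then L is distributive (i.e., u ∩ (v + w) = (u ∩ v) + (u ∩ w) for all u, v, w ∈ L) if and only if for every i ∈ I the lattice L ∩ X_i := { u ∩ X_i | u ∈ L } of subspaces of X_i is distributive (i.e., (u ∩ X_i) ∩ ((v ∩ X_i) + (w ∩ X_i)) = ((u ∩ v) ∩ X_i) + ((u ∩ w) ∩ X_i) for all u, v, w ∈ L). -/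

import Mathlib

/-- Let `L` be a lattice of subspaces of a vector space `X`
(closed under sum and intersection).  Suppose `X = ⨁_{i ∈ I} X i` is an internal
direct sum decomposition such that every `u ∈ L` satisfies `u = ⨁ i, u ⊓ X i`.
Then `L` is distributive iff for every `i` the lattice `L ∩ X i` is distributive. -/
theorem lattice_distributive_iff_components
    (k : Type*) [Field k] (X : Type*) [AddCommGroup X] [Module k X]
    (L : Set (Submodule k X))
    (hLsup : ∀ u ∈ L, ∀ v ∈ L, u ⊔ v ∈ L)
    (hLinf : ∀ u ∈ L, ∀ v ∈ L, u ⊓ v ∈ L)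
    (I : Type*) (Xi : I → Submodule k X)
    (hIndep : iSupIndep Xi)
    (hTop : (⨆ i, Xi i) = ⊤)
    (hDecomp : ∀ u ∈ L, u = ⨆ i, u ⊓ Xi i) :
    (∀ u ∈ L, ∀ v ∈ L, ∀ w ∈ L, u ⊓ (v ⊔ w) = (u ⊓ v) ⊔ (u ⊓ w)) ↔
      (∀ i, ∀ u ∈ L, ∀ v ∈ L, ∀ w ∈ L,
        (u ⊓ Xi i) ⊓ ((v ⊓ Xi i) ⊔ (w ⊓ Xi i)) =
          ((u ⊓ v) ⊓ Xi i) ⊔ ((u ⊓ w) ⊓ Xi i)) := by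
  have key : ∀ (a : I → Submodule k X), (∀ j, a j ≤ Xi j) → ∀ i, (⨆ j, a j) ⊓ Xi i = a i := by
    intro a ha i
    apply le_antisymm
    · have h1 : (⨆ j, a j) ≤ a i ⊔ ⨆ j, ⨆ (_ : j ≠ i), Xi j := by
        refine iSup_le fun j => ?_
        by_cases hj : j = i
        · subst hj
          exact le_sup_left
        · exact le_sup_of_le_right ((ha j).trans (le_iSup₂_of_le j hj le_rfl))
      have h2 : (⨆ j, ⨆ (_ : j ≠ i), Xi j) ⊓ Xi i = ⊥ := (hIndep i).symm.eq_bot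
      calc (⨆ j, a j) ⊓ Xi i ≤ (a i ⊔ ⨆ j, ⨆ (_ : j ≠ i), Xi j) ⊓ Xi i :=
            inf_le_inf_right _ h1
        _ = a i ⊔ (⨆ j, ⨆ (_ : j ≠ i), Xi j) ⊓ Xi i := sup_inf_assoc_of_le _ (ha i)
        _ ≤ a i := by rw [h2, sup_bot_eq]
    · exact le_inf (le_iSup a i) (ha i)
  have hsup : ∀ v ∈ L, ∀ w ∈ L, ∀ i, (v ⊔ w) ⊓ Xi i = (v ⊓ Xi i) ⊔ (w ⊓ Xi i) := by
    intro v hv w hw i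
    have h : v ⊔ w = ⨆ j, (v ⊓ Xi j) ⊔ (w ⊓ Xi j) := by
      rw [iSup_sup_eq, ← hDecomp v hv, ← hDecomp w hw]
    rw [h]
    exact key _ (fun j => sup_le inf_le_right inf_le_right) i
  have hl : ∀ u ∈ L, ∀ v ∈ L, ∀ w ∈ L, ∀ i,
      (u ⊓ Xi i) ⊓ ((v ⊓ Xi i) ⊔ (w ⊓ Xi i)) = (u ⊓ (v ⊔ w)) ⊓ Xi i := by
    intro u hu v hv w hw i
    rw [← hsup v hv w hw i, ← inf_inf_distrib_right]
  constructor
  · intro h i u hu v hv w hw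
    rw [hl u hu v hv w hw i, h u hu v hv w hw,
      hsup _ (hLinf u hu v hv) _ (hLinf u hu w hw) i]
  · intro h u hu v hv w hw
    rw [hDecomp _ (hLinf u hu _ (hLsup v hv w hw)),
      hDecomp _ (hLsup _ (hLinf u hu v hv) _ (hLinf u hu w hw))]
    refine iSup_congr fun i => ?_
    rw [← hl u hu v hv w hw i, h i u hu v hv w hw,
      hsup _ (hLinf u hu v hv) _ (hLinf u hu w hw) i]
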